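/- Let M be a d×n integer matrix of full row rank d all of whose d×d minors lie in {-1,0,1} (a unimodular matrix), and let D = diag(w₁,…,wₙ) be an n×n diagonal matrix with nonnegative real diagonal entries. Write M_ω = M·D and L_ω = M·D·Mᵀ (the weighted Laplacian). Then the Lebesgue volume of the zonotope Z(L_ω) equals the Lebesgue volume of the zonotope Z(M_ω), and both equal det(L_ω). -/

import Mathlib

open MeasureTheory

/-- The zonotope generated by a `d × n` real matrix: the image of the unit cube
`[0,1]^n` under the linear map `x ↦ M x`. -/
def zonotope {d n : ℕ} (M : Matrix (Fin d) (Fin n) ℝ) : Set (Fin d → ℝ) :=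
  {y | ∃ x : Fin n → ℝ, (∀ i, x i ∈ Set.Icc (0 : ℝ) 1) ∧ y = M.mulVec x}

/-!
Two classical formulas are compared term by term. Shephard's formula says that the volume of the
zonotope `Z(A)` is the sum of `|det A_S|` over the sets `S` of `d` columns, and the Cauchy–Binet
formula says that `det (M D Mᵀ)` is the sum of `w^S (det M_S)²`. Since `det (M D)_S = w^S det M_S`
and a minor equal to `0` or `±1` satisfies `(det M_S)² = |det M_S|`, the two sums agree for
`A = M D`; and for the square matrix `L = M D Mᵀ` Shephard's sum has the single term `|det L|`.

Shephard's formula is proved by deletion and contraction of the first column. A zero column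
changes neither side. A nonzero column can be moved to the first basis vector `e₀` by an
invertible matrix `g`, which multiplies both sides by `|det g|`. Sweeping a convex body `K` along
`[0, e₀]` lengthens by `1` every nonempty slice of `K` parallel to `e₀`, so it increases the
volume by that of the projection of `K` along `e₀`, the zonotope of the contraction; the minors
split in the same way according to whether `S` contains the first column.
-/

open Finset Matrix
open scoped Pointwise

section OrderEmbedding

variable {d n : ℕ}

theorem strictMono_cons_zero_succ_comp (S : Fin d ↪o Fin n) :
    StrictMono (Fin.cons 0 (Fin.succ ∘ S) : Fin (d + 1) → Fin (n + 1)) :=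
  Fin.strictMono_cons.2 ⟨fun _ ↦ Fin.succ_pos _, Fin.strictMono_succ.comp S.strictMono⟩

/-- The order embedding enumerating `{0} ∪ (S + 1)`, where an order embedding `S` of `Fin d` into
`Fin n` encodes a `d`-element set of column indices. It describes the maximal minors that involve
the first column. -/
def consZeroOrderEmb (S : Fin d ↪o Fin n) : Fin (d + 1) ↪o Fin (n + 1) :=
  OrderEmbedding.ofStrictMono _ (strictMono_cons_zero_succ_comp S)

theorem exists_trans_succOrderEmb_eq {S : Fin d ↪o Fin (n + 1)} (hS : ∀ i, S i ≠ 0) :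
    ∃ T : Fin d ↪o Fin n, T.trans (Fin.succOrderEmb n) = S :=
  ⟨.ofStrictMono (fun i ↦ (S i).pred (hS i)) fun _ _ hij ↦
      Fin.pred_lt_pred_iff.2 (S.strictMono hij),
    DFunLike.ext _ _ fun i ↦ Fin.succ_pred (S i) (hS i)⟩

theorem trans_succOrderEmb_injective :
    Function.Injective fun T : Fin d ↪o Fin n ↦ T.trans (Fin.succOrderEmb n) := fun _ _ h ↦
  DFunLike.ext _ _ fun i ↦ Fin.succ_injective _ (DFunLike.congr_fun h i)

theorem consZeroOrderEmb_injective :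
    Function.Injective (consZeroOrderEmb : (Fin d ↪o Fin n) → _) := fun _ _ h ↦
  DFunLike.ext _ _ fun i ↦ Fin.succ_injective _ (DFunLike.congr_fun h i.succ)

theorem exists_consZeroOrderEmb_eq {S : Fin (d + 1) ↪o Fin (n + 1)} (hS : S 0 = 0) :
    ∃ T : Fin d ↪o Fin n, consZeroOrderEmb T = S := by
  obtain ⟨T, hT⟩ := exists_trans_succOrderEmb_eq (S := (Fin.succOrderEmb d).trans S) fun i ↦
    (hS ▸ S.strictMono i.succ_pos).ne'
  exact ⟨T, DFunLike.ext _ _ <| Fin.cases hS.symm fun i ↦ DFunLike.congr_fun hT i⟩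

theorem sum_orderEmb_succ {R : Type*} [AddCommMonoid R] (F : (Fin (d + 1) ↪o Fin (n + 1)) → R) :
    ∑ S, F S = ∑ S : Fin (d + 1) ↪o Fin n, F (S.trans (Fin.succOrderEmb n)) +
      ∑ S : Fin d ↪o Fin n, F (consZeroOrderEmb S) := by
  have hbij : Function.Bijective (Sum.elim (fun S : Fin (d + 1) ↪o Fin n ↦
      S.trans (Fin.succOrderEmb n)) (consZeroOrderEmb : (Fin d ↪o Fin n) → _)) := by
    refine ⟨trans_succOrderEmb_injective.sumElim consZeroOrderEmb_injective fun S T h ↦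
      Fin.succ_ne_zero (S 0) (DFunLike.congr_fun h 0), fun S ↦ ?_⟩
    by_cases h0 : S 0 = 0
    · obtain ⟨T, hT⟩ := exists_consZeroOrderEmb_eq h0
      exact ⟨.inr T, hT⟩
    · obtain ⟨T, hT⟩ := exists_trans_succOrderEmb_eq (S := S) fun i ↦
        ((Fin.pos_of_ne_zero h0).trans_le (OrderHomClass.mono S i.zero_le)).ne'
      exact ⟨.inl T, hT⟩
  rw [← hbij.sum_comp, Fintype.sum_sum_type]
  rfl

theorem orderEmb_fin_eq_refl (S : Fin d ↪o Fin d) : S = RelEmbedding.refl _ := by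
  have hsurj : Function.Surjective S := Finite.surjective_of_injective S.injective
  refine DFunLike.coe_injective ((S.strictMono.range_inj strictMono_id).1 ?_)
  rw [hsurj.range_eq, Set.range_id]

theorem orderEmb_comp_perm_bijective {α : Type*} [LinearOrder α] :
    Function.Bijective fun p : (Fin d ↪o α) × Equiv.Perm (Fin d) ↦
      (⟨p.1 ∘ p.2, p.1.injective.comp p.2.injective⟩ :
        {f : Fin d → α // Function.Injective f}) := by
  refine ⟨fun ⟨S, σ⟩ ⟨T, τ⟩ h ↦ ?_, fun ⟨f, hf⟩ ↦ ?_⟩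
  · have hfun : S ∘ σ = T ∘ τ := congrArg Subtype.val h
    obtain rfl : S = T := by
      refine DFunLike.coe_injective ((S.strictMono.range_inj T.strictMono).1 ?_)
      rw [← σ.surjective.range_comp, hfun, τ.surjective.range_comp]
    exact Prod.ext rfl (Equiv.ext fun i ↦ S.injective (congrFun hfun i))
  · have hsort : StrictMono (f ∘ Tuple.sort f) :=
      (Tuple.monotone_sort f).strictMono_of_injective (hf.comp (Tuple.sort f).injective)
    exact ⟨(.ofStrictMono _ hsort, (Tuple.sort f)⁻¹), Subtype.ext <| funext fun i ↦ by simp⟩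

end OrderEmbedding

section Det

variable {R m n : Type*} [CommRing R] [Fintype m] [DecidableEq m] [Fintype n]

theorem det_mul_eq_sum_det_submatrix (A : Matrix m n R) (B : Matrix n m R) :
    (A * B).det = ∑ f : m → n, (A.submatrix id f).det * ∏ i, B (f i) i := by
  have hrow (i : m) : (A * B)ᵀ i = ∑ k, B k i • Aᵀ k := by
    ext j
    simp [mul_apply, mul_comm]
  calc (A * B).det = detRowAlternating.toMultilinearMap fun i ↦ ∑ k, B k i • Aᵀ k := by
        rw [← det_transpose]
        exact congrArg det (funext hrow)
    _ = ∑ f : m → n, det (fun i ↦ B (f i) i • Aᵀ (f i)) := MultilinearMap.map_sum _ _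
    _ = ∑ f : m → n, (A.submatrix id f).det * ∏ i, B (f i) i := by
        refine sum_congr rfl fun f _ ↦ ?_
        rw [← det_transpose (A.submatrix id f), mul_comm]
        exact det_mul_column _ _

end Det

theorem det_mul_eq_sum_orderEmb {R α : Type*} [CommRing R] [LinearOrder α] [Fintype α] {d : ℕ}
    (A : Matrix (Fin d) α R) (B : Matrix α (Fin d) R) :
    (A * B).det = ∑ S : Fin d ↪o α, (A.submatrix id S).det * (B.submatrix S id).det := by
  set F : (Fin d → α) → R := fun f ↦ (A.submatrix id f).det * ∏ i, B (f i) i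
  have hF (f : Fin d → α) (hf : ¬ Function.Injective f) : F f = 0 := by
    obtain ⟨i, j, hij, hne⟩ := Function.not_injective_iff.1 hf
    have hdet : (A.submatrix id f).det = 0 := det_zero_of_column_eq hne fun k ↦ congrArg (A k) hij
    simp only [F, hdet, zero_mul]
  calc (A * B).det = ∑ f, F f := det_mul_eq_sum_det_submatrix A B
    _ = ∑ f : {f : Fin d → α // Function.Injective f}, F f :=
        (Fintype.sum_of_injective _ Subtype.val_injective _ _
          (fun f hf ↦ hF f (by simpa using hf)) fun _ ↦ rfl).symm
    _ = ∑ S : Fin d ↪o α, ∑ σ : Equiv.Perm (Fin d), F (S ∘ σ) := by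
        rw [← orderEmb_comp_perm_bijective.sum_comp, Fintype.sum_prod_type]
    _ = ∑ S : Fin d ↪o α, (A.submatrix id S).det * (B.submatrix S id).det := by
        refine sum_congr rfl fun S _ ↦ ?_
        rw [det_apply' (B.submatrix S id), mul_sum]
        refine sum_congr rfl fun σ _ ↦ ?_
        have hσ : (A.submatrix id (S ∘ σ)).det = σ.sign * (A.submatrix id S).det :=
          det_permute' σ (A.submatrix id S)
        simp only [F, hσ, submatrix_apply, id, Function.comp_apply]
        ring

theorem det_submatrix_mul_diagonal {R m n : Type*} [CommRing R] [Fintype m] [DecidableEq m]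
    [Fintype n] [DecidableEq n] (M : Matrix m n R) (w : n → R) (f : m → n) :
    ((M * diagonal w).submatrix id f).det = (∏ i, w (f i)) * (M.submatrix id f).det := by
  have hmul : (M * diagonal w).submatrix id f = M.submatrix id f * diagonal (w ∘ f) := by
    ext i j
    simp [mul_diagonal]
  rw [hmul, det_mul, det_diagonal, mul_comm]
  rfl

theorem det_mul_diagonal_mul_transpose {R α : Type*} [CommRing R] [LinearOrder α] [Fintype α]
    {d : ℕ} (M : Matrix (Fin d) α R) (w : α → R) :
    (M * diagonal w * Mᵀ).det =
      ∑ S : Fin d ↪o α, (∏ i, w (S i)) * (M.submatrix id S).det ^ 2 := by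
  rw [det_mul_eq_sum_orderEmb]
  refine sum_congr rfl fun S _ ↦ ?_
  rw [det_submatrix_mul_diagonal, ← transpose_submatrix, det_transpose]
  ring

section AbsMinorSum

variable {d n : ℕ}

/-- The sum of the absolute values of the maximal minors of a `d × n` matrix. It is the right-hand
side of Shephard's volume formula for the zonotope of the matrix. A choice of `d` columns is encoded
as an order embedding, so each set of columns is counted once. -/
noncomputable def absMinorSum (M : Matrix (Fin d) (Fin n) ℝ) : ℝ :=
  ∑ S : Fin d ↪o Fin n, |(M.submatrix id S).det|

theorem absMinorSum_nonneg (M : Matrix (Fin d) (Fin n) ℝ) : 0 ≤ absMinorSum M :=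
  sum_nonneg fun _ _ ↦ abs_nonneg _

theorem absMinorSum_of_square (M : Matrix (Fin d) (Fin d) ℝ) : absMinorSum M = |M.det| :=
  Fintype.sum_eq_single (RelEmbedding.refl _) fun S hS ↦ absurd (orderEmb_fin_eq_refl S) hS

theorem absMinorSum_mul (g : Matrix (Fin d) (Fin d) ℝ) (M : Matrix (Fin d) (Fin n) ℝ) :
    absMinorSum (g * M) = |g.det| * absMinorSum M := by
  rw [absMinorSum, absMinorSum, mul_sum]
  refine sum_congr rfl fun S _ ↦ ?_
  have hmul : (g * M).submatrix id S = g * M.submatrix id S := rfl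
  rw [hmul, det_mul, abs_mul]

theorem absMinorSum_mul_diagonal (M : Matrix (Fin d) (Fin n) ℝ) {w : Fin n → ℝ}
    (hw : ∀ i, 0 ≤ w i) :
    absMinorSum (M * diagonal w) =
      ∑ S : Fin d ↪o Fin n, (∏ i, w (S i)) * |(M.submatrix id S).det| := by
  refine sum_congr rfl fun S _ ↦ ?_
  rw [det_submatrix_mul_diagonal, abs_mul, abs_of_nonneg (prod_nonneg fun i _ ↦ hw (S i))]

theorem absMinorSum_of_col_zero_eq_zero {M : Matrix (Fin d) (Fin (n + 1)) ℝ} (hM : M.col 0 = 0) :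
    absMinorSum M = absMinorSum (M.submatrix id Fin.succ) := by
  refine (Fintype.sum_of_injective _ trans_succOrderEmb_injective _ _ (fun S hS ↦ ?_)
    fun _ ↦ rfl).symm
  obtain ⟨i, hi⟩ : ∃ i, S i = 0 := by
    by_contra! h
    exact hS (exists_trans_succOrderEmb_eq h)
  rw [det_eq_zero_of_column_eq_zero i fun k ↦ ?_, abs_zero]
  rw [submatrix_apply, hi]
  exact congrFun hM k

theorem absMinorSum_of_col_zero_eq_single {M : Matrix (Fin (d + 1)) (Fin (n + 1)) ℝ}
    (hM : M.col 0 = Pi.single 0 1) :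
    absMinorSum M =
      absMinorSum (M.submatrix id Fin.succ) + absMinorSum (M.submatrix Fin.succ Fin.succ) := by
  rw [absMinorSum, sum_orderEmb_succ]
  refine congrArg (absMinorSum (M.submatrix id Fin.succ) + ·)
    (sum_congr rfl fun S _ ↦ congrArg abs ?_)
  have hcol (i : Fin (d + 1)) : M.submatrix id (consZeroOrderEmb S) i 0 =
      (Pi.single 0 1 : Fin (d + 1) → ℝ) i := congrFun hM i
  have hrest (i : Fin d) : M.submatrix id (consZeroOrderEmb S) i.succ 0 = 0 := by
    rw [hcol, Pi.single_eq_of_ne i.succ_ne_zero]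
  rw [det_succ_column_zero, Fin.sum_univ_succ, hcol, Pi.single_eq_same]
  simp only [hrest, Fin.val_zero, pow_zero, one_mul, mul_zero, zero_mul, sum_const_zero, add_zero]
  rfl

end AbsMinorSum

section Slice

variable {d : ℕ}

/-- The slice of a subset of `ℝ^(d+1)` along the line parallel to the first coordinate axis over the
point `y` of the remaining coordinates, as a subset of `ℝ`. It is used to compute volumes by
Cavalieri's principle. -/
def coordSlice (K : Set (Fin (d + 1) → ℝ)) (y : Fin d → ℝ) : Set ℝ :=
  {t | (Fin.cons t y : Fin (d + 1) → ℝ) ∈ K}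

theorem volume_eq_lintegral_volume_coordSlice {K : Set (Fin (d + 1) → ℝ)} (hK : MeasurableSet K) :
    volume K = ∫⁻ y, volume (coordSlice K y) := by
  have hcons : ⇑(MeasurableEquiv.piFinSuccAbove (fun _ : Fin (d + 1) ↦ ℝ) 0).symm =
      fun p ↦ Fin.cons p.1 p.2 :=
    funext fun p ↦ Fin.insertNth_zero' p.1 p.2
  have hmp := (volume_preserving_piFinSuccAbove (fun _ : Fin (d + 1) ↦ ℝ) 0).symm
  rw [hcons] at hmp
  rw [← hmp.measure_preimage hK.nullMeasurableSet, Measure.volume_eq_prod,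
    Measure.prod_apply_symm (hmp.measurable hK)]
  rfl

theorem coordSlice_add_image_single (K : Set (Fin (d + 1) → ℝ)) (I : Set ℝ) (y : Fin d → ℝ) :
    coordSlice (K + Pi.single 0 '' I) y = coordSlice K y + I := by
  have hcons (s t : ℝ) : (Fin.cons s y : Fin (d + 1) → ℝ) + Pi.single 0 t = Fin.cons (s + t) y := by
    refine funext (Fin.cases ?_ fun j ↦ ?_) <;> simp
  ext t
  constructor
  · rintro ⟨x, hx, _, ⟨s, hs, rfl⟩, hxs⟩
    obtain rfl : x = Fin.cons (t - s) y := by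
      rw [eq_sub_of_add_eq hxs, sub_eq_iff_eq_add, hcons, sub_add_cancel]
    exact ⟨t - s, hx, s, hs, sub_add_cancel t s⟩
  · rintro ⟨r, hr, s, hs, rfl⟩
    exact ⟨_, hr, _, ⟨s, hs, rfl⟩, hcons r s⟩

theorem isCompact_coordSlice {K : Set (Fin (d + 1) → ℝ)} (hK : IsCompact K) (y : Fin d → ℝ) :
    IsCompact (coordSlice K y) :=
  (hK.image (continuous_apply 0)).of_isClosed_subset
    (hK.isClosed.preimage (continuous_id.finCons continuous_const)) fun _ ht ↦ ⟨_, ht, rfl⟩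

theorem convex_coordSlice {K : Set (Fin (d + 1) → ℝ)} (hK : Convex ℝ K) (y : Fin d → ℝ) :
    Convex ℝ (coordSlice K y) := by
  intro s hs t ht a b ha hb hab
  have hcons : a • (Fin.cons s y : Fin (d + 1) → ℝ) + b • (Fin.cons t y : Fin (d + 1) → ℝ) =
      Fin.cons (a • s + b • t) y :=
    funext <| Fin.cases (by simp) fun j ↦ by simp [← add_mul, hab]
  rw [coordSlice, Set.mem_ofPred_eq, ← hcons]
  exact hK hs ht ha hb hab

theorem coordSlice_nonempty_iff {K : Set (Fin (d + 1) → ℝ)} {y : Fin d → ℝ} :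
    (coordSlice K y).Nonempty ↔ y ∈ Fin.tail '' K := by
  constructor
  · rintro ⟨t, ht⟩
    exact ⟨_, ht, rfl⟩
  · rintro ⟨x, hx, rfl⟩
    exact ⟨x 0, (Fin.cons_self_tail x).symm ▸ hx⟩

theorem volume_add_Icc {S : Set ℝ} (hS : IsCompact S) (hc : Convex ℝ S) (hne : S.Nonempty)
    {a b : ℝ} (hab : a ≤ b) : volume (S + Set.Icc a b) = volume S + volume (Set.Icc a b) := by
  have hIcc := eq_Icc_of_connected_compact ⟨hne, hc.isPreconnected⟩ hS
  have hle : sInf S ≤ sSup S := Real.sInf_le_sSup S hS.bddBelow hS.bddAbove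
  rw [hIcc, Set.Icc_add_Icc hle hab, Real.volume_Icc, Real.volume_Icc, Real.volume_Icc,
    ← ENNReal.ofReal_add (sub_nonneg.2 hle) (sub_nonneg.2 hab), add_sub_add_comm]

theorem volume_add_image_single_Icc {K : Set (Fin (d + 1) → ℝ)} (hK : IsCompact K)
    (hc : Convex ℝ K) {a b : ℝ} (hab : a ≤ b) :
    volume (K + Pi.single 0 '' Set.Icc a b) =
      volume K + volume (Set.Icc a b) * volume (Fin.tail '' K) := by
  have hsingle : Continuous fun t : ℝ ↦ (Pi.single 0 t : Fin (d + 1) → ℝ) :=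
    continuous_single (A := fun _ : Fin (d + 1) ↦ ℝ) 0
  have htail : MeasurableSet (Fin.tail '' K) :=
    (hK.image (f := fun x : Fin (d + 1) → ℝ ↦ Fin.tail x)
      (continuous_pi fun i ↦ continuous_apply i.succ)).measurableSet
  rw [volume_eq_lintegral_volume_coordSlice (hK.add (isCompact_Icc.image hsingle)).measurableSet,
    volume_eq_lintegral_volume_coordSlice hK.measurableSet, ← lintegral_indicator_const htail,
    ← lintegral_add_right _ (measurable_const.indicator htail)]
  refine lintegral_congr fun y ↦ ?_
  rw [coordSlice_add_image_single]
  by_cases hy : y ∈ Fin.tail '' K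
  · rw [Set.indicator_of_mem hy]
    exact volume_add_Icc (isCompact_coordSlice hK y) (convex_coordSlice hc y)
      (coordSlice_nonempty_iff.2 hy) hab
  · have hempty : coordSlice K y = ∅ :=
      Set.not_nonempty_iff_eq_empty.1 (mt coordSlice_nonempty_iff.1 hy)
    rw [Set.indicator_of_notMem hy, hempty, Set.empty_add, measure_empty, add_zero]

end Slice

theorem exists_det_ne_zero_mulVec_eq {ι : Type*} [Fintype ι] [DecidableEq ι] {v w : ι → ℝ}
    (hv : v ≠ 0) (hw : w ≠ 0) : ∃ g : Matrix ι ι ℝ, g.det ≠ 0 ∧ g *ᵥ v = w := by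
  obtain ⟨A, hA⟩ := SeparatingDual.exists_continuousLinearEquiv_apply_eq (R := ℝ) hv hw
  refine ⟨LinearMap.toMatrix' A.toLinearEquiv, ?_, ?_⟩
  · rw [LinearMap.det_toMatrix']
    exact (LinearEquiv.isUnit_det' A.toLinearEquiv).ne_zero
  · rw [LinearMap.toMatrix'_mulVec]
    exact hA

section Zonotope

variable {d m n : ℕ}

theorem zonotope_eq_image (M : Matrix (Fin d) (Fin n) ℝ) :
    zonotope M = M.mulVecLin '' Set.Icc 0 1 := by
  ext y
  simp only [zonotope, Set.mem_Icc, Set.mem_ofPred_eq, Set.mem_image, mulVecLin_apply, eq_comm,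
    Pi.le_def, Pi.zero_apply, Pi.one_apply, forall_and]

theorem isCompact_zonotope (M : Matrix (Fin d) (Fin n) ℝ) : IsCompact (zonotope M) := by
  rw [zonotope_eq_image]
  exact isCompact_Icc.image M.mulVecLin.continuous_of_finiteDimensional

theorem convex_zonotope (M : Matrix (Fin d) (Fin n) ℝ) : Convex ℝ (zonotope M) := by
  rw [zonotope_eq_image]
  exact (convex_Icc 0 1).linear_image _

theorem zonotope_mul (A : Matrix (Fin d) (Fin m) ℝ) (B : Matrix (Fin m) (Fin n) ℝ) :
    zonotope (A * B) = A.mulVecLin '' zonotope B := by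
  simp only [zonotope_eq_image, mulVecLin_mul, LinearMap.coe_comp, Set.image_comp]

theorem volume_zonotope_mul (g : Matrix (Fin d) (Fin d) ℝ) (M : Matrix (Fin d) (Fin n) ℝ) :
    volume (zonotope (g * M)) = ENNReal.ofReal |g.det| * volume (zonotope M) := by
  rw [zonotope_mul, Measure.addHaar_image_linearMap, ← toLin'_apply', LinearMap.det_toLin']

theorem tail_image_zonotope (M : Matrix (Fin (d + 1)) (Fin n) ℝ) :
    Fin.tail '' zonotope M = zonotope (M.submatrix Fin.succ id) := by
  rw [zonotope_eq_image, zonotope_eq_image, Set.image_image]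
  rfl

theorem zonotope_eq_add_image_smul_col (M : Matrix (Fin d) (Fin (n + 1)) ℝ) :
    zonotope M = zonotope (M.submatrix id Fin.succ) + (· • M.col 0) '' Set.Icc (0 : ℝ) 1 := by
  have hcons (t : ℝ) (x : Fin n → ℝ) :
      M *ᵥ Fin.cons t x = M.submatrix id Fin.succ *ᵥ x + t • M.col 0 := by
    ext i
    simp [mulVec, dotProduct, Fin.sum_univ_succ, mul_comm, add_comm]
  ext y
  constructor
  · rintro ⟨x, hx, rfl⟩
    refine ⟨_, ⟨Fin.tail x, fun i ↦ hx i.succ, rfl⟩, _, ⟨x 0, hx 0, rfl⟩, ?_⟩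
    simp only [← hcons, Fin.cons_self_tail]
  · rintro ⟨_, ⟨x, hx, rfl⟩, _, ⟨t, ht, rfl⟩, rfl⟩
    exact ⟨Fin.cons t x, Fin.cases ht hx, (hcons t x).symm⟩

theorem zonotope_of_col_zero_eq_zero {M : Matrix (Fin d) (Fin (n + 1)) ℝ} (hM : M.col 0 = 0) :
    zonotope M = zonotope (M.submatrix id Fin.succ) := by
  rw [zonotope_eq_add_image_smul_col, hM]
  simp only [smul_zero, (Set.nonempty_Icc.2 zero_le_one).image_const, Set.singleton_zero, add_zero]

theorem volume_zonotope_of_col_zero_eq_single {M : Matrix (Fin (d + 1)) (Fin (n + 1)) ℝ}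
    (hM : M.col 0 = Pi.single 0 1) :
    volume (zonotope M) = volume (zonotope (M.submatrix id Fin.succ)) +
      volume (zonotope (M.submatrix Fin.succ Fin.succ)) := by
  have hsmul : (· • M.col 0) '' Set.Icc (0 : ℝ) 1 = Pi.single 0 '' Set.Icc (0 : ℝ) 1 := by
    simp only [hM, ← Pi.single_smul, smul_eq_mul, mul_one]
  rw [zonotope_eq_add_image_smul_col, hsmul, volume_add_image_single_Icc (isCompact_zonotope _)
    (convex_zonotope _) zero_le_one, Real.volume_Icc, sub_zero, ENNReal.ofReal_one, one_mul,
    tail_image_zonotope, submatrix_submatrix]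
  rfl

theorem volume_zonotope_fin_zero (M : Matrix (Fin d) (Fin 0) ℝ) :
    volume (zonotope M) = ENNReal.ofReal (absMinorSum M) := by
  have hzero : zonotope M = {0} := by
    rw [zonotope_eq_image, Subsingleton.elim (1 : Fin 0 → ℝ) 0, Set.Icc_self, Set.image_singleton,
      map_zero]
  rw [hzero]
  cases d with
  | zero =>
    rw [Set.eq_univ_of_forall (s := {0}) fun y ↦ Subsingleton.elim y 0]
    simp [absMinorSum_of_square, volume_pi]
  | succ d =>
    have : IsEmpty (Fin (d + 1) ↪o Fin 0) := ⟨fun S ↦ (S 0).elim0⟩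
    rw [measure_singleton, absMinorSum, univ_eq_empty, sum_empty, ENNReal.ofReal_zero]

theorem volume_zonotope (M : Matrix (Fin d) (Fin n) ℝ) :
    volume (zonotope M) = ENNReal.ofReal (absMinorSum M) := by
  induction n generalizing d with
  | zero => exact volume_zonotope_fin_zero M
  | succ n ih =>
    by_cases hM : M.col 0 = 0
    · rw [zonotope_of_col_zero_eq_zero hM, ih, absMinorSum_of_col_zero_eq_zero hM]
    cases d with
    | zero => exact absurd (Subsingleton.elim _ _) hM
    | succ d =>
      obtain ⟨g, hg, hgM⟩ := exists_det_ne_zero_mulVec_eq hM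
        (Pi.single_ne_zero_iff.2 one_ne_zero : (Pi.single 0 1 : Fin (d + 1) → ℝ) ≠ 0)
      have hcol : (g * M).col 0 = Pi.single 0 1 := hgM
      have hvol : volume (zonotope (g * M)) = ENNReal.ofReal (absMinorSum (g * M)) := by
        rw [volume_zonotope_of_col_zero_eq_single hcol, ih, ih,
          absMinorSum_of_col_zero_eq_single hcol,
          ENNReal.ofReal_add (absMinorSum_nonneg _) (absMinorSum_nonneg _)]
      rw [volume_zonotope_mul, absMinorSum_mul, ENNReal.ofReal_mul (abs_nonneg _)] at hvol
      exact (ENNReal.mul_right_inj (by simpa using hg) ENNReal.ofReal_ne_top).1 hvol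

end Zonotope

theorem stmt10_general {d n : ℕ} {M : Matrix (Fin d) (Fin n) ℝ} (c : ℝ)
    (hM : ∀ S : Fin d ↪o Fin n, (M.submatrix id S).det ∈ ({-c, 0, c} : Set ℝ))
    {D : Matrix (Fin n) (Fin n) ℝ} (hD : D.IsDiag) (hDpos : ∀ i, 0 ≤ D i i) :
    volume (zonotope (M * D * Mᵀ)) = ENNReal.ofReal |c| * volume (zonotope (M * D)) ∧
      volume (zonotope (M * D * Mᵀ)) = ENNReal.ofReal (M * D * Mᵀ).det := by
  obtain ⟨w, rfl⟩ : ∃ w, diagonal w = D := ⟨_, hD.diagonal_diag⟩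
  have hw (i : Fin n) : 0 ≤ w i := by simpa using hDpos i
  have hsq (S : Fin d ↪o Fin n) :
      (M.submatrix id S).det ^ 2 = |c| * |(M.submatrix id S).det| := by
    rcases hM S with h | h | h <;> rw [h] <;> simp [sq]
  have hdet : (M * diagonal w * Mᵀ).det = |c| * absMinorSum (M * diagonal w) := by
    rw [det_mul_diagonal_mul_transpose, absMinorSum_mul_diagonal M hw, mul_sum]
    exact sum_congr rfl fun S _ ↦ by rw [hsq, mul_left_comm]
  have hnonneg : 0 ≤ (M * diagonal w * Mᵀ).det :=
    hdet ▸ mul_nonneg (abs_nonneg c) (absMinorSum_nonneg _)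
  have hvol :
      volume (zonotope (M * diagonal w * Mᵀ)) = ENNReal.ofReal (M * diagonal w * Mᵀ).det := by
    rw [volume_zonotope, absMinorSum_of_square, abs_of_nonneg hnonneg]
  refine ⟨?_, hvol⟩
  rw [hvol, hdet, ENNReal.ofReal_mul (abs_nonneg c), volume_zonotope]

/-- **Weighted polyhedral matrix tree theorem.** For a full row rank unimodular
integer matrix `M` and a diagonal matrix `D = diag(w₁,…,wₙ)` with nonnegative
real entries, with `M_ω = M·D` and weighted Laplacian `L_ω = M·D·Mᵀ`, the
Lebesgue volumes of `Z(L_ω)` and `Z(M_ω)` agree and both equal `det L_ω`. -/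
theorem stmt10 (d n : ℕ) (M : Matrix (Fin d) (Fin n) ℝ)
    (hint : ∀ i j, ∃ z : ℤ, M i j = (z : ℝ))
    (hrank : M.rank = d)
    (huni : ∀ f : Fin d → Fin n, Function.Injective f →
      (M.submatrix id f).det ∈ ({-1, 0, 1} : Set ℝ))
    (D : Matrix (Fin n) (Fin n) ℝ)
    (hDdiag : ∀ i j, i ≠ j → D i j = 0)
    (hDpos : ∀ i, 0 ≤ D i i) :
    volume (zonotope (M * D * M.transpose)) = volume (zonotope (M * D)) ∧
    volume (zonotope (M * D * M.transpose)) = ENNReal.ofReal (M * D * M.transpose).det := by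
  simpa using stmt10_general 1 (fun S ↦ huni S S.injective) (fun i j ↦ hDdiag i j) hDpos
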